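/- For every 0 ≤ α < ω₁ there exist a completely regular topological space X and a subset E ⊆ X such that E is (α+1)-embedded in X but E is not α-embedded in X. -/

import Mathlib

/-!
Fix a set `D` in the Cantor space `Y = 2^ω` of additive but not of multiplicative class `α`,
obtained by diagonalizing a universal set. The ambient space is the compact space
`X = Y × 2^(Y × ℝ)`. For `P ⊆ Y` let `pieceOver ℝ P` consist of the pairs `(y, x)` with `y ∈ P`,
`x` supported by `P × ℝ`, and `x (y, r) = 1` for some `r`. The example is
`E = pieceOver ℝ D ∪ pieceOver ℝ Dᶜ`.

Both pieces are open in `E`: near a point `(y, x)` of the piece over `P`, a single coordinate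
`(y, r)` with `x (y, r) = 1` excludes the other piece.

`E` is not `α`-embedded: a set `C` of a functional class in `X` does not distinguish `(y, 0)` from
`(y, x)` if `x` vanishes on a certain countable set of coordinates, which is the same for all `y`.
If `C` had trace `pieceOver ℝ D` on `E`, then `D` would be the section `{y | (y, 0) ∈ C}`, and so
`C` cannot have multiplicative class `α`.

`E` is `(α + 1)`-embedded: each piece is 0-embedded in `X`, since by the countable chain condition
in the cube the closure of an open subset of the piece depends on countably many coordinates, and
is therefore the trace of a zero set of `X`. Extensions of the two parts of a given set are glued
along `D × 2^(Y × ℝ)` and its complement, which both have multiplicative class `α + 1`.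
-/

open Set Topology

/-- A topological space is pseudo-ℵ₁-compact if every locally finite family of
(pairwise distinct) nonempty open subsets is at most countable. -/
def PseudoAleph1Compact (Z : Type*) [TopologicalSpace Z] : Prop :=
  ∀ 𝒰 : Set (Set Z), (∀ U ∈ 𝒰, IsOpen U) → (∀ U ∈ 𝒰, U.Nonempty) →
    LocallyFinite (fun U : 𝒰 => (U : Set Z)) → 𝒰.Countable

/-- `A` is functionally closed in `Z` if it is the zero set of a continuous real function. -/
def FunctionallyClosed {Z : Type*} [TopologicalSpace Z] (A : Set Z) : Prop :=
  ∃ f : Z → ℝ, Continuous f ∧ A = f ⁻¹' {0}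

/-- `A` is functionally open in `Z` if its complement is functionally closed. -/
def FunctionallyOpen {Z : Type*} [TopologicalSpace Z] (A : Set Z) : Prop :=
  FunctionallyClosed Aᶜ

/-- `FunClass Z true α A` : `A` is of the functionally additive class `α` in `Z`;
`FunClass Z false α A` : `A` is of the functionally multiplicative class `α` in `Z`. -/
inductive FunClass (Z : Type*) [TopologicalSpace Z] : Bool → Ordinal.{0} → Set Z → Prop
  | open_ (A : Set Z) (h : FunctionallyOpen A) : FunClass Z true 0 A
  | closed_ (A : Set Z) (h : FunctionallyClosed A) : FunClass Z false 0 A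
  | union (α : Ordinal.{0}) (A : ℕ → Set Z) (β : ℕ → Ordinal.{0}) (hα : α ≠ 0)
      (hβ : ∀ n, β n < α) (h : ∀ n, FunClass Z false (β n) (A n)) :
      FunClass Z true α (⋃ n, A n)
  | inter (α : Ordinal.{0}) (A : ℕ → Set Z) (β : ℕ → Ordinal.{0}) (hα : α ≠ 0)
      (hβ : ∀ n, β n < α) (h : ∀ n, FunClass Z true (β n) (A n)) :
      FunClass Z false α (⋂ n, A n)

/-- `A` is α-embedded in `Z` if every subset of `A` of functionally multiplicative class `α`
in the subspace `A` is the trace on `A` of a set of functionally multiplicative class `α` in `Z`. -/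
def IsAlphaEmbedded {Z : Type*} [TopologicalSpace Z] (α : Ordinal.{0}) (A : Set Z) : Prop :=
  ∀ B : Set Z, B ⊆ A → FunClass ↥A false α (Subtype.val ⁻¹' B) →
    ∃ C : Set Z, FunClass Z false α C ∧ C ∩ A = B

/-- `Z` is α-universal if every subset of `Z` is α-embedded in `Z`. -/
def AlphaUniversal (Z : Type*) [TopologicalSpace Z] (α : Ordinal.{0}) : Prop :=
  ∀ A : Set Z, IsAlphaEmbedded α A

/-- The projection of the product `∀ t, X t` onto the coordinates in `S`. -/
def proj {T : Type*} {X : T → Type*} (S : Set T) (x : ∀ t, X t) : ∀ t : S, X t.1 :=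
  fun t => x t.1

/-- A functionally measurable (Baire) set: a member of some functionally additive or
multiplicative class `α` with `α < ω₁`. -/
def FunctionallyMeasurable {Z : Type*} [TopologicalSpace Z] (A : Set Z) : Prop :=
  ∃ (b : Bool) (β : Ordinal.{0}), β < (Cardinal.aleph 1).ord ∧ FunClass Z b β A

/-- `Y` has a regular `Gδ`-diagonal. -/
def RegularGDeltaDiagonal (Y : Type*) [TopologicalSpace Y] : Prop :=
  ∃ G : ℕ → Set (Y × Y), (∀ n, IsOpen (G n)) ∧
    {p : Y × Y | p.1 = p.2} = ⋂ n, G n ∧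
    {p : Y × Y | p.1 = p.2} = ⋂ n, closure (G n)

section FunctionalClasses

variable {Z W : Type*} [TopologicalSpace Z] [TopologicalSpace W] {A B : Set Z} {α β : Ordinal.{0}}
  {b : Bool}

lemma FunctionallyClosed.isClosed (h : FunctionallyClosed A) : IsClosed A := by
  obtain ⟨f, hf, rfl⟩ := h
  exact isClosed_singleton.preimage hf

lemma FunctionallyOpen.isOpen (h : FunctionallyOpen A) : IsOpen A :=
  isClosed_compl_iff.1 (FunctionallyClosed.isClosed h)

lemma FunctionallyClosed.compl (h : FunctionallyClosed A) : FunctionallyOpen Aᶜ := by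
  rwa [FunctionallyOpen, compl_compl]

lemma FunctionallyClosed.preimage (h : FunctionallyClosed A) {g : W → Z} (hg : Continuous g) :
    FunctionallyClosed (g ⁻¹' A) := by
  obtain ⟨f, hf, rfl⟩ := h
  exact ⟨f ∘ g, hf.comp hg, rfl⟩

lemma functionallyClosed_of_isClosed [TopologicalSpace.PseudoMetrizableSpace Z]
    (h : IsClosed A) : FunctionallyClosed A := by
  let := TopologicalSpace.pseudoMetrizableSpacePseudoMetric Z
  rcases A.eq_empty_or_nonempty with rfl | hne
  · exact ⟨fun _ => 1, continuous_const, by simp⟩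
  · exact ⟨fun x => Metric.infDist x A, Metric.continuous_infDist_pt A,
      ext fun _ => h.mem_iff_infDist_zero hne⟩

lemma functionallyOpen_of_isOpen [TopologicalSpace.PseudoMetrizableSpace Z]
    (h : IsOpen A) : FunctionallyOpen A :=
  functionallyClosed_of_isClosed h.isClosed_compl

lemma functionallyClosed_of_isClopen (h : IsClopen A) : FunctionallyClosed A := by
  have htrue : FunctionallyClosed ({true} : Set Bool) :=
    functionallyClosed_of_isClosed (isClosed_discrete _)
  have := htrue.preimage ((continuous_boolIndicator_iff_isClopen A).2 h)
  rwa [preimage_boolIndicator_true] at this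

/-- The defining functions are gathered in one map to the metrizable space `ι → ℝ`. -/
lemma FunctionallyClosed.iInter {ι : Type*} [Countable ι] {A : ι → Set Z}
    (h : ∀ i, FunctionallyClosed (A i)) : FunctionallyClosed (⋂ i, A i) := by
  choose f hf hA using h
  have hzero : FunctionallyClosed ({0} : Set (ι → ℝ)) :=
    functionallyClosed_of_isClosed isClosed_singleton
  convert hzero.preimage (continuous_pi hf) using 1
  ext x
  simp [hA, funext_iff]

lemma FunctionallyClosed.inter (hA : FunctionallyClosed A) (hB : FunctionallyClosed B) :
    FunctionallyClosed (A ∩ B) := by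
  rw [inter_eq_iInter]
  exact .iInter (Bool.forall_bool.2 ⟨hB, hA⟩)

lemma FunctionallyClosed.union (hA : FunctionallyClosed A) (hB : FunctionallyClosed B) :
    FunctionallyClosed (A ∪ B) := by
  obtain ⟨f, hf, rfl⟩ := hA
  obtain ⟨g, hg, rfl⟩ := hB
  exact ⟨fun x => f x * g x, hf.mul hg, by ext; simp⟩

lemma FunctionallyClosed.exists_seq_functionallyOpen (h : FunctionallyClosed A) :
    ∃ U : ℕ → Set Z, (∀ n, FunctionallyOpen (U n)) ∧ (∀ n, A ⊆ U n) ∧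
      ⋂ n, closure (U n) ⊆ A := by
  obtain ⟨f, hf, rfl⟩ := h
  refine ⟨fun n => f ⁻¹' Metric.ball 0 (1 / (n + 1)), fun n => ?_, fun n x hx => ?_,
    fun x hx => ?_⟩
  · exact (functionallyOpen_of_isOpen Metric.isOpen_ball).preimage hf
  · rw [mem_preimage, mem_singleton_iff.1 hx]
    exact Metric.mem_ball_self Nat.one_div_pos_of_nat
  · have hle (n : ℕ) : dist (f x) 0 ≤ 1 / (n + 1) :=
      Metric.closure_ball_subset_closedBall <|
        hf.closure_preimage_subset _ (mem_iInter.1 hx n)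
    exact dist_le_zero.1 (ge_of_tendsto' tendsto_one_div_add_atTop_nhds_zero_nat hle)

lemma funClass_false_zero_iff : FunClass Z false 0 A ↔ FunctionallyClosed A := by
  refine ⟨fun h => ?_, .closed_ A⟩
  cases h with
  | closed_ _ h => exact h
  | inter _ _ _ h => exact absurd rfl h

lemma FunClass.compl (h : FunClass Z b α A) : FunClass Z (!b) α Aᶜ := by
  induction h with
  | open_ A h => exact .closed_ _ h
  | closed_ A h => exact .open_ _ h.compl
  | union α A β hα hβ _ ih => rw [compl_iUnion]; exact .inter α _ β hα hβ ih
  | inter α A β hα hβ _ ih => rw [compl_iInter]; exact .union α _ β hα hβ ih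

lemma FunClass.preimage (h : FunClass Z b α A) {g : W → Z} (hg : Continuous g) :
    FunClass W b α (g ⁻¹' A) := by
  induction h with
  | open_ A h => exact .open_ _ (FunctionallyClosed.preimage h hg)
  | closed_ A h => exact .closed_ _ (h.preimage hg)
  | union α A β hα hβ _ ih => rw [preimage_iUnion]; exact .union α _ β hα hβ ih
  | inter α A β hα hβ _ ih => rw [preimage_iInter]; exact .inter α _ β hα hβ ih

lemma FunClass.iUnion_of_lt {ι : Type*} [Countable ι] [Nonempty ι] {A : ι → Set Z}
    {β : ι → Ordinal.{0}} (hβ : ∀ i, β i < α) (h : ∀ i, FunClass Z false (β i) (A i)) :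
    FunClass Z true α (⋃ i, A i) := by
  obtain ⟨e, he⟩ := exists_surjective_nat ι
  rw [← he.iUnion_comp]
  exact .union α _ (β ∘ e) (zero_le.trans_lt (hβ (e 0))).ne' (fun n => hβ (e n)) fun n => h (e n)

lemma FunClass.iInter_of_lt {ι : Type*} [Countable ι] [Nonempty ι] {A : ι → Set Z}
    {β : ι → Ordinal.{0}} (hβ : ∀ i, β i < α) (h : ∀ i, FunClass Z true (β i) (A i)) :
    FunClass Z false α (⋂ i, A i) := by
  simpa only [compl_iUnion, compl_compl, Bool.not_true] using
    (iUnion_of_lt hβ fun i => (h i).compl).compl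

lemma FunClass.multiplicative_mono (h : FunClass Z false α A) (hαβ : α ≤ β) :
    FunClass Z false β A := by
  rcases hαβ.eq_or_lt with rfl | hlt
  · exact h
  cases h with
  | closed_ A h =>
    obtain ⟨U, hU, hAU, hUA⟩ := h.exists_seq_functionallyOpen
    have hA : A = ⋂ n, U n :=
      (subset_iInter hAU).antisymm ((iInter_mono fun _ => subset_closure).trans hUA)
    rw [hA]
    exact iInter_of_lt (fun _ => hlt) fun n => .open_ _ (hU n)
  | inter _ A γ _ hγ h => exact iInter_of_lt (fun n => (hγ n).trans hlt) h

lemma FunClass.mono (h : FunClass Z b α A) (hαβ : α ≤ β) : FunClass Z b β A := by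
  cases b with
  | false => exact h.multiplicative_mono hαβ
  | true => simpa using (h.compl.multiplicative_mono hαβ).compl

lemma FunClass.of_lt (h : FunClass Z b α A) (hαβ : α < β) (c : Bool) : FunClass Z c β A := by
  cases b <;> cases c
  · exact h.mono hαβ.le
  · simpa only [iUnion_const] using iUnion_of_lt (ι := Unit) (fun _ => hαβ) fun _ => h
  · simpa only [iInter_const] using iInter_of_lt (ι := Unit) (fun _ => hαβ) fun _ => h
  · exact h.mono hαβ.le

lemma FunClass.additive_union (hA : FunClass Z true α A) (hB : FunClass Z true α B) :
    FunClass Z true α (A ∪ B) := by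
  cases hA with
  | open_ A hA =>
    cases hB with
    | open_ B hB =>
      refine .open_ _ ?_
      rw [FunctionallyOpen, compl_union]
      exact FunctionallyClosed.inter hA hB
    | union _ _ _ h => exact absurd rfl h
  | union _ A β h0 hβ hA =>
    cases hB with
    | open_ => exact absurd rfl h0
    | union _ B γ _ hγ hB =>
      rw [← iUnion_sumElim]
      exact iUnion_of_lt (β := Sum.elim β γ) (Sum.forall.2 ⟨hβ, hγ⟩) (Sum.forall.2 ⟨hA, hB⟩)

lemma FunClass.multiplicative_inter (hA : FunClass Z false α A) (hB : FunClass Z false α B) :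
    FunClass Z false α (A ∩ B) := by
  simpa only [compl_union, compl_compl, Bool.not_true] using
    (hA.compl.additive_union hB.compl).compl

lemma FunClass.multiplicative_union (hA : FunClass Z false α A) (hB : FunClass Z false α B) :
    FunClass Z false α (A ∪ B) := by
  cases hA with
  | closed_ A hA =>
    cases hB with
    | closed_ B hB => exact .closed_ _ (hA.union hB)
    | inter _ _ _ h => exact absurd rfl h
  | inter _ A β h0 hβ hA =>
    cases hB with
    | closed_ => exact absurd rfl h0
    | inter _ B γ _ hγ hB =>
      have heq : (⋂ n, A n) ∪ ⋂ n, B n = ⋂ p : ℕ × ℕ, (A p.1 ∪ B p.2) := by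
        rw [iInter_union_iInter]
        exact (iInf_prod (f := fun p : ℕ × ℕ => A p.1 ∪ B p.2)).symm
      rw [heq]
      exact iInter_of_lt (β := fun p => max (β p.1) (γ p.2)) (fun p => max_lt (hβ _) (hγ _))
        fun p => ((hA _).mono (le_max_left _ _)).additive_union ((hB _).mono (le_max_right _ _))

/-- Every factor is listed once for each `n` with `β n` large enough, and replaced by the whole
space for the other `n`. -/
lemma FunClass.exists_eq_iInter_iInter {β : ℕ → Ordinal.{0}} (h : FunClass Z false α A)
    (hα : α ≠ 0) (hβ : ∀ γ < α, ∃ n, γ ≤ β n) :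
    ∃ B : ℕ → ℕ → Set Z, (∀ n k, FunClass Z true (β n) (B n k)) ∧ ⋂ n, ⋂ k, B n k = A := by
  classical
  cases h with
  | closed_ => exact absurd rfl hα
  | inter _ A γ _ hγ hA =>
    refine ⟨fun n k => if γ k ≤ β n then A k else univ, fun n k => ?_, ?_⟩
    · dsimp only
      split_ifs with hle
      · exact (hA k).mono hle
      · exact (FunClass.open_ _ (functionallyClosed_of_isClopen isClopen_univ.compl)).mono zero_le
    · ext x
      simp only [mem_iInter]
      refine ⟨fun hx k => ?_, fun hx n k => ?_⟩
      · obtain ⟨n, hn⟩ := hβ (γ k) (hγ k)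
        simpa only [if_pos hn] using hx n k
      · split_ifs
        exacts [hx k, mem_univ x]

end FunctionalClasses

section Embedding

variable {Z : Type*} [TopologicalSpace Z] {A A₁ A₂ D : Set Z} {α : Ordinal.{0}}

lemma isAlphaEmbedded_iff : IsAlphaEmbedded α A ↔
    ∀ B : Set A, FunClass A false α B → ∃ C : Set Z, FunClass Z false α C ∧
      Subtype.val ⁻¹' C = B := by
  refine ⟨fun h B hB => ?_, fun h B hBA hB => ?_⟩
  · obtain ⟨C, hC, hCB⟩ := h (Subtype.val '' B) (Subtype.coe_image_subset A B)
      (by rwa [preimage_image_eq _ Subtype.val_injective])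
    refine ⟨C, hC, ?_⟩
    rw [← preimage_image_eq B Subtype.val_injective, ← hCB, Subtype.preimage_coe_inter_self]
  · obtain ⟨C, hC, hCB⟩ := h _ hB
    refine ⟨C, hC, ?_⟩
    rw [inter_comm, ← Subtype.image_preimage_coe, hCB, Subtype.image_preimage_coe,
      inter_eq_right.2 hBA]

lemma FunClass.exists_preimage_val_eq (hA : IsAlphaEmbedded 0 A) {b : Bool} {B : Set A}
    (h : FunClass A b α B) : ∃ C : Set Z, FunClass Z b α C ∧ Subtype.val ⁻¹' C = B := by
  induction h with
  | open_ B h =>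
    obtain ⟨C, hC, hCB⟩ := isAlphaEmbedded_iff.1 hA _ (.closed_ _ h)
    exact ⟨Cᶜ, hC.compl, by rw [preimage_compl, hCB, compl_compl]⟩
  | closed_ B h => exact isAlphaEmbedded_iff.1 hA _ (.closed_ _ h)
  | union α B β hα hβ _ ih =>
    choose C hC hCB using ih
    exact ⟨⋃ n, C n, .union α C β hα hβ hC, by simp only [preimage_iUnion, hCB]⟩
  | inter α B β hα hβ _ ih =>
    choose C hC hCB using ih
    exact ⟨⋂ n, C n, .inter α C β hα hβ hC, by simp only [preimage_iInter, hCB]⟩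

lemma IsAlphaEmbedded.of_zero (hA : IsAlphaEmbedded 0 A) (α : Ordinal.{0}) :
    IsAlphaEmbedded α A :=
  isAlphaEmbedded_iff.2 fun _ hB => hB.exists_preimage_val_eq hA

lemma IsAlphaEmbedded.exists_forall_mem_iff (hA : IsAlphaEmbedded α A) {E B : Set Z}
    (hAE : A ⊆ E) (hB : FunClass E false α (Subtype.val ⁻¹' B)) :
    ∃ C : Set Z, FunClass Z false α C ∧ ∀ a ∈ A, a ∈ C ↔ a ∈ B := by
  obtain ⟨C, hC, hCB⟩ := isAlphaEmbedded_iff.1 hA _ (hB.preimage (continuous_inclusion hAE))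
  exact ⟨C, hC, fun a ha => Set.ext_iff.1 hCB ⟨a, ha⟩⟩

lemma IsAlphaEmbedded.union (h₁ : IsAlphaEmbedded α A₁) (h₂ : IsAlphaEmbedded α A₂)
    (hD : ∀ b, FunClass Z b α D) (h₁D : A₁ ⊆ D) (h₂D : A₂ ⊆ Dᶜ) :
    IsAlphaEmbedded α (A₁ ∪ A₂) := by
  intro B hBA hB
  obtain ⟨C₁, hC₁, hCB₁⟩ := h₁.exists_forall_mem_iff subset_union_left hB
  obtain ⟨C₂, hC₂, hCB₂⟩ := h₂.exists_forall_mem_iff subset_union_right hB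
  refine ⟨(C₁ ∩ D) ∪ (C₂ ∩ Dᶜ), (hC₁.multiplicative_inter (hD false)).multiplicative_union
    (hC₂.multiplicative_inter (hD true).compl), ?_⟩
  ext a
  constructor
  · rintro ⟨⟨haC, haD⟩ | ⟨haC, haD⟩, ha | ha⟩
    · exact (hCB₁ a ha).1 haC
    · exact absurd haD (h₂D ha)
    · exact absurd (h₁D ha) haD
    · exact (hCB₂ a ha).1 haC
  · intro haB
    refine ⟨?_, hBA haB⟩
    rcases hBA haB with ha | ha
    · exact .inl ⟨(hCB₁ a ha).2 haB, h₁D ha⟩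
    · exact .inr ⟨(hCB₂ a ha).2 haB, h₂D ha⟩

lemma isAlphaEmbedded_zero_of_forall_isOpen
    (h : ∀ O : Set Z, IsOpen O →
      ∃ F : Set Z, FunctionallyClosed F ∧ F ∩ A = closure (O ∩ A) ∩ A) :
    IsAlphaEmbedded 0 A := by
  refine isAlphaEmbedded_iff.2 fun B hB => ?_
  obtain ⟨U, hU, hBU, hUB⟩ := (funClass_false_zero_iff.1 hB).exists_seq_functionallyOpen
  choose O hO hOU using fun n => isOpen_induced_iff.1 (hU n).isOpen
  choose F hF hFO using fun n => h (O n) (hO n)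
  have hFU (n : ℕ) : Subtype.val ⁻¹' F n = closure (U n) := by
    ext a
    rw [closure_subtype, ← hOU, Subtype.image_preimage_coe, inter_comm A]
    simpa using Set.ext_iff.1 (hFO n) a
  refine ⟨⋂ n, F n, .closed_ _ (.iInter hF), ?_⟩
  simp only [preimage_iInter, hFU]
  exact hUB.antisymm (subset_iInter fun n => (hBU n).trans subset_closure)

end Embedding

section UniversalSets

/-- The Cantor space `2^ω`, whose points serve as codes of sets. -/
abbrev Cantor : Type := ℕ → Bool

variable {X : Type*} [TopologicalSpace X] {b : Bool} {α : Ordinal.{0}} {U : Set (Cantor × X)}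

/-- `U ⊆ 2^ω × X` is universal for a functional class of `X` if it belongs to that class in
`2^ω × X` and every set of that class in `X` is a section of `U`. The class is encoded by `b` and
`α` as in `FunClass`. -/
structure IsUniversalSet (b : Bool) (α : Ordinal.{0}) (U : Set (Cantor × X)) : Prop where
  funClass : FunClass (Cantor × X) b α U
  exists_section_eq : ∀ A : Set X, FunClass X b α A → ∃ c : Cantor, Prod.mk c ⁻¹' U = A

lemma IsUniversalSet.compl (hU : IsUniversalSet b α U) : IsUniversalSet (!b) α Uᶜ where
  funClass := hU.funClass.compl
  exists_section_eq A hA := by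
    obtain ⟨c, hc⟩ := hU.exists_section_eq Aᶜ (by simpa using hA.compl)
    exact ⟨c, by rw [preimage_compl, hc, compl_compl]⟩

/-- A code enumerates the basic open sets disjoint from the closed set it represents. -/
lemma exists_isUniversalSet_zero (X : Type*) [TopologicalSpace X] [SecondCountableTopology X]
    [TopologicalSpace.PseudoMetrizableSpace X] :
    ∃ U : Set (Cantor × X), IsUniversalSet false 0 U := by
  classical
  let B := TopologicalSpace.countableBasis X
  have hB : TopologicalSpace.IsTopologicalBasis B := TopologicalSpace.isBasis_countableBasis X
  refine ⟨⋂ u : B, {p | p.1 (Encodable.encode u) = true ∧ p.2 ∈ u.1}ᶜ, ?_, fun A hA => ?_⟩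
  · refine .closed_ _ (functionallyClosed_of_isClosed (isClosed_iInter fun u => ?_))
    have hcode : Continuous fun p : Cantor × X => p.1 (Encodable.encode u) := by fun_prop
    exact (((isOpen_discrete {true}).preimage hcode).inter
      ((hB.isOpen u.2).preimage continuous_snd)).isClosed_compl
  · have hAc := (funClass_false_zero_iff.1 hA).isClosed.isOpen_compl
    refine ⟨fun n => decide (∃ u : B, Encodable.encode u = n ∧ u.1 ⊆ Aᶜ), ?_⟩
    ext x
    simp only [mem_preimage, mem_iInter, mem_compl_iff, mem_ofPred_eq, decide_eq_true_eq,
      Encodable.encode_inj, exists_eq_left]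
    refine ⟨fun h => ?_, fun hxA u ⟨huA, hxu⟩ => huA hxu hxA⟩
    by_contra hxA
    obtain ⟨u, hu, hxu, huA⟩ := hB.exists_subset_of_mem_open (show x ∈ Aᶜ from hxA) hAc
    exact h ⟨u, hu⟩ ⟨huA, hxu⟩

/-- A code of a set of multiplicative class `α` splits into countably many codes `c (n, k)`; the
set coded by `c (n, k)` has additive class `β n`. -/
lemma exists_isUniversalSet_of_seq {β : ℕ → Ordinal.{0}} (hα : α ≠ 0) (hβα : ∀ n, β n < α)
    (hβ : ∀ γ < α, ∃ n, γ ≤ β n) {U : ℕ → Set (Cantor × X)}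
    (hU : ∀ n, IsUniversalSet true (β n) (U n)) :
    ∃ V : Set (Cantor × X), IsUniversalSet false α V := by
  let split : Cantor ≃ₜ (ℕ → Cantor) := cantorSpaceHomeomorphNatToCantorSpace
  let row (n k : ℕ) (p : Cantor × X) : Cantor × X := (split p.1 (Nat.pair n k), p.2)
  refine ⟨⋂ i : ℕ × ℕ, row i.1 i.2 ⁻¹' U i.1, ?_, fun A hA => ?_⟩
  · refine .iInter_of_lt (fun i => hβα i.1) fun i => (hU i.1).funClass.preimage ?_
    have := split.continuous
    fun_prop
  · obtain ⟨B, hB, rfl⟩ := hA.exists_eq_iInter_iInter hα hβ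
    choose c hc using fun n k => (hU n).exists_section_eq _ (hB n k)
    refine ⟨split.symm fun m => c m.unpair.1 m.unpair.2, ?_⟩
    ext x
    simp [row, ← hc]

lemma exists_seq_lt_forall_le (h0 : α ≠ 0) (hα : α < (Cardinal.aleph 1).ord) :
    ∃ β : ℕ → Ordinal.{0}, (∀ n, β n < α) ∧ ∀ γ < α, ∃ n, γ ≤ β n := by
  have hcount : (Iio α).Countable := by
    rwa [← Cardinal.le_aleph0_iff_set_countable, Cardinal.mk_Iio_ordinal, Cardinal.lift_le_aleph0,
      ← Cardinal.lt_aleph_one_iff, ← Cardinal.lt_ord]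
  obtain ⟨β, hβ⟩ := hcount.exists_eq_range ⟨0, pos_iff_ne_zero.2 h0⟩
  refine ⟨β, fun n => hβ.symm.subset (mem_range_self n), fun γ hγ => ?_⟩
  obtain ⟨n, hn⟩ := hβ.subset hγ
  exact ⟨n, hn.ge⟩

theorem exists_isUniversalSet (X : Type*) [TopologicalSpace X] [SecondCountableTopology X]
    [TopologicalSpace.PseudoMetrizableSpace X] (hα : α < (Cardinal.aleph 1).ord) :
    ∃ U : Set (Cantor × X), IsUniversalSet false α U := by
  induction α using WellFoundedLT.induction with
  | ind α ih =>
    rcases eq_or_ne α 0 with rfl | h0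
    · exact exists_isUniversalSet_zero X
    obtain ⟨β, hβα, hβ⟩ := exists_seq_lt_forall_le h0 hα
    choose U hU using fun n => ih (β n) (hβα n) ((hβα n).trans hα)
    exact exists_isUniversalSet_of_seq h0 hβα hβ fun n => (hU n).compl

theorem exists_funClass_true_not_funClass_false (hα : α < (Cardinal.aleph 1).ord) :
    ∃ D : Set Cantor, FunClass Cantor true α D ∧ ¬ FunClass Cantor false α D := by
  obtain ⟨U, hU⟩ := exists_isUniversalSet Cantor hα
  have hdiag : Continuous fun c : Cantor => (c, c) := by fun_prop
  refine ⟨((fun c => (c, c)) ⁻¹' U)ᶜ, (hU.funClass.preimage hdiag).compl, fun h => ?_⟩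
  obtain ⟨c, hc⟩ := hU.exists_section_eq _ h
  exact iff_not_self (Set.ext_iff.1 hc c)

end UniversalSets

section CountableChainCondition

open MeasureTheory

lemma exists_countable_iUnion_subset_closure {Ω ι : Type*} [TopologicalSpace Ω]
    [MeasurableSpace Ω] (μ : Measure Ω) [SFinite μ] [μ.IsOpenPosMeasure] {s : ι → Set Ω}
    (hopen : ∀ i, IsOpen (s i)) (hmeas : ∀ i, MeasurableSet (s i)) :
    ∃ C : Set ι, C.Countable ∧ ⋃ i, s i ⊆ closure (⋃ i ∈ C, s i) := by
  obtain ⟨𝒱, h𝒱s, h𝒱, hae⟩ :=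
    Measure.exists_ae_subset_biUnion_countable μ (forall_mem_range.2 hmeas)
  obtain ⟨C, -, hC⟩ : ∃ C ⊆ univ, BijOn s C 𝒱 :=
    SurjOn.exists_bijOn_subset (by rwa [SurjOn, image_univ])
  refine ⟨C, hC.mapsTo.countable_of_injOn hC.injOn h𝒱, iUnion_subset fun i => ?_⟩
  rw [← sUnion_image, hC.image_eq]
  have hnull : μ (s i \ closure (⋃₀ 𝒱)) = 0 :=
    measure_mono_null (sdiff_subset_sdiff_right subset_closure)
      (ae_le_set.1 (hae _ (mem_range_self i)))
  exact sdiff_eq_empty.1 <| ((hopen i).sdiff isClosed_closure).eq_empty_of_measure_zero hnull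

instance isOpenPosMeasure_infinitePi {T : Type*} {X : T → Type*} [∀ t, TopologicalSpace (X t)]
    [∀ t, MeasurableSpace (X t)] [∀ t, OpensMeasurableSpace (X t)] (μ : ∀ t, Measure (X t))
    [∀ t, IsProbabilityMeasure (μ t)] [∀ t, (μ t).IsOpenPosMeasure] :
    (Measure.infinitePi μ).IsOpenPosMeasure where
  open_pos O hO := by
    rintro ⟨x, hx⟩ hnull
    obtain ⟨K, u, hu, hKO⟩ := isOpen_pi_iff.1 hO x hx
    have hprod : ∏ t ∈ K, μ t (u t) ≠ 0 :=
      Finset.prod_ne_zero_iff.2 fun t ht => (hu t ht).1.measure_ne_zero (μ t) ⟨x t, (hu t ht).2⟩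
    refine hprod ?_
    rw [← Measure.infinitePi_pi μ fun t ht => (hu t ht).1.measurableSet]
    exact measure_mono_null hKO hnull

instance isOpenPosMeasure_uniformOfFintype {X : Type*} [Fintype X] [Nonempty X]
    [TopologicalSpace X] [MeasurableSpace X] [OpensMeasurableSpace X] :
    (PMF.uniformOfFintype X).toMeasure.IsOpenPosMeasure where
  open_pos O hO hne := by
    simpa [PMF.toMeasure_apply_eq_zero_iff _ hO.measurableSet, ← nonempty_iff_ne_empty] using hne

end CountableChainCondition

section Cylinders

variable {T X : Type*} [TopologicalSpace X]

lemma isOpen_setOf_eqOn [DiscreteTopology X] {K : Set T} (hK : K.Finite) (x : T → X) :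
    IsOpen {w : T → X | EqOn w x K} :=
  isOpen_set_pi (s := fun t => {x t}) hK fun _ _ => isOpen_discrete _

lemma measurableSet_setOf_eqOn {T X : Type*} [MeasurableSpace X] [MeasurableSingletonClass X]
    {K : Set T} (hK : K.Countable) (x : T → X) : MeasurableSet {w : T → X | EqOn w x K} :=
  .pi (t := fun t => {x t}) hK fun _ _ => .singleton _

lemma exists_finset_setOf_eqOn_subset {O : Set (T → X)} (hO : IsOpen O) {x : T → X}
    (hx : x ∈ O) : ∃ K : Finset T, {w | EqOn w x K} ⊆ O := by
  obtain ⟨K, u, hu, hKO⟩ := isOpen_pi_iff.1 hO x hx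
  exact ⟨K, fun w hw => hKO fun t ht => (hw ht).symm ▸ (hu t ht).2⟩

variable {Y : Type*} [TopologicalSpace Y]

lemma exists_prod_setOf_eqOn_subset {B : Set (Set Y)} (hB : TopologicalSpace.IsTopologicalBasis B)
    {O : Set (Y × (T → X))} (hO : IsOpen O) {a : Y × (T → X)} (ha : a ∈ O) :
    ∃ V ∈ B, a.1 ∈ V ∧ ∃ K : Finset T, V ×ˢ {w | EqOn w a.2 K} ⊆ O := by
  obtain ⟨V, W, hV, hW, haV, haW, hVW⟩ := isOpen_prod_iff.1 hO a.1 a.2 ha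
  obtain ⟨V', hV', haV', hVV⟩ := hB.exists_subset_of_mem_open haV hV
  obtain ⟨K, hK⟩ := exists_finset_setOf_eqOn_subset hW haW
  exact ⟨V', hV', haV', K, (prod_mono hVV hK).trans hVW⟩

variable [LindelofSpace Y]

lemma exists_countable_forall_eqOn_mem_of_isOpen {O : Set (Y × (T → X))} (hO : IsOpen O)
    {x : T → X} (hx : ∀ y, (y, x) ∈ O) :
    ∃ K : Set T, K.Countable ∧ ∀ y, ∀ w, EqOn w x K → (y, w) ∈ O := by
  choose V hV hyV K hK using fun y =>
    exists_prod_setOf_eqOn_subset TopologicalSpace.isTopologicalBasis_opens hO (hx y)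
  obtain ⟨s, hs, hcover⟩ :=
    isLindelof_univ.elim_countable_subcover V hV fun y _ => mem_iUnion.2 ⟨y, hyV y⟩
  refine ⟨⋃ y ∈ s, (K y : Set T), hs.biUnion fun y _ => (K y).countable_toSet, fun y w hw => ?_⟩
  obtain ⟨z, hz, hyz⟩ := mem_iUnion₂.1 (hcover (mem_univ y))
  exact hK z ⟨hyz, hw.mono (subset_biUnion_of_mem (u := fun z => (K z : Set T)) hz)⟩

lemma exists_countable_forall_eqOn_apply_eq {f : Y × (T → X) → ℝ} (hf : Continuous f)
    (x : T → X) : ∃ K : Set T, K.Countable ∧ ∀ y, ∀ w, EqOn w x K → f (y, w) = f (y, x) := by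
  have hnear (n : ℕ) : ∃ K : Set T, K.Countable ∧
      ∀ y, ∀ w, EqOn w x K → dist (f (y, w)) (f (y, x)) < 1 / (n + 1) := by
    have hO : IsOpen {a : Y × (T → X) | dist (f a) (f (a.1, x)) < 1 / (n + 1)} :=
      isOpen_lt (by fun_prop) continuous_const
    exact exists_countable_forall_eqOn_mem_of_isOpen hO fun y => by
      simpa only [mem_ofPred_eq, dist_self] using Nat.one_div_pos_of_nat
  choose K hK hfK using hnear
  refine ⟨⋃ n, K n, countable_iUnion hK, fun y w hw => dist_le_zero.1 ?_⟩
  exact ge_of_tendsto' tendsto_one_div_add_atTop_nhds_zero_nat fun n =>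
    (hfK n y w (hw.mono (subset_iUnion K n))).le

lemma FunctionallyClosed.exists_countable_forall_eqOn_mem_iff {A : Set (Y × (T → X))}
    (h : FunctionallyClosed A) (x : T → X) :
    ∃ K : Set T, K.Countable ∧ ∀ y, ∀ w, EqOn w x K → ((y, w) ∈ A ↔ (y, x) ∈ A) := by
  obtain ⟨f, hf, rfl⟩ := h
  obtain ⟨K, hK, hfK⟩ := exists_countable_forall_eqOn_apply_eq hf x
  exact ⟨K, hK, fun y w hw => by rw [mem_preimage, mem_preimage, hfK y w hw]⟩

lemma FunClass.exists_countable_forall_eqOn_mem_iff {b : Bool} {α : Ordinal.{0}}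
    {A : Set (Y × (T → X))} (h : FunClass (Y × (T → X)) b α A) (x : T → X) :
    ∃ K : Set T, K.Countable ∧ ∀ y, ∀ w, EqOn w x K → ((y, w) ∈ A ↔ (y, x) ∈ A) := by
  induction h with
  | open_ A h =>
    obtain ⟨K, hK, hA⟩ := FunctionallyClosed.exists_countable_forall_eqOn_mem_iff h x
    exact ⟨K, hK, fun y w hw => not_iff_not.1 (hA y w hw)⟩
  | closed_ A h => exact h.exists_countable_forall_eqOn_mem_iff x
  | union _ A _ _ _ _ ih =>
    choose K hK hA using ih
    refine ⟨⋃ n, K n, countable_iUnion hK, fun y w hw => ?_⟩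
    simp only [mem_iUnion]
    exact exists_congr fun n => hA n y w (hw.mono (subset_iUnion K n))
  | inter _ A _ _ _ _ ih =>
    choose K hK hA using ih
    refine ⟨⋃ n, K n, countable_iUnion hK, fun y w hw => ?_⟩
    simp only [mem_iInter]
    exact forall_congr' fun n => hA n y w (hw.mono (subset_iUnion K n))

end Cylinders

section CountablyMixing

variable {T Y : Type*} {E : Set (Y × (T → Bool))}

/-- `E ⊆ Y × 2^T` is countably mixing if, for `a, b ∈ E`, the values of `a` on a countable set of
coordinates and the values of `b` on finitely many others can be combined in a point of `E` with
the same first component as `a`. -/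
def CountablyMixing (E : Set (Y × (T → Bool))) : Prop :=
  ∀ a ∈ E, ∀ b ∈ E, ∀ S : Set T, S.Countable → ∀ K : Finset T,
    ∃ v, (a.1, v) ∈ E ∧ EqOn v a.2 S ∧ EqOn v b.2 (K \ S)

variable [TopologicalSpace Y]

open MeasureTheory in
lemma exists_countable_iUnion_setOf_eqOn_subset_closure {ι : Type*} (K : ι → Finset T)
    (x : ι → T → Bool) : ∃ C : Set ι, C.Countable ∧
      ⋃ i, {w | EqOn w (x i) (K i)} ⊆ closure (⋃ i ∈ C, {w | EqOn w (x i) (K i)}) :=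
  exists_countable_iUnion_subset_closure
    (Measure.infinitePi fun _ : T => (PMF.uniformOfFintype Bool).toMeasure)
    (fun i => isOpen_setOf_eqOn (K i).finite_toSet (x i))
    fun i => measurableSet_setOf_eqOn (K i).countable_toSet (x i)

/-- For each basic open `V ⊆ Y`, the countable chain condition selects countably many of the
cylinders `c` such that the trace of `V × c` on `E` lies in `O`. -/
lemma CountablyMixing.exists_countable_support [SecondCountableTopology Y]
    (hE : CountablyMixing E) {O : Set (Y × (T → Bool))} (hO : IsOpen O) :
    ∃ S : Set T, S.Countable ∧ ∃ G : Set (Y × (T → Bool)),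
      (∀ a ∈ G, ∀ w, EqOn w a.2 S → (a.1, w) ∈ G) ∧ G ∩ E ⊆ O ∧ O ∩ E ⊆ closure (G ∩ E) := by
  have hB := TopologicalSpace.isBasis_countableBasis Y
  let I (V : Set Y) := {i : Finset T × (Y × (T → Bool)) //
    i.2 ∈ E ∧ ∀ a ∈ E, a.1 ∈ V → EqOn a.2 i.2.2 i.1 → a ∈ O}
  choose C hC hdense using fun V : Set Y =>
    exists_countable_iUnion_setOf_eqOn_subset_closure (fun i : I V => i.1.1) fun i => i.1.2.2
  let S : Set T := ⋃ V ∈ TopologicalSpace.countableBasis Y, ⋃ i ∈ C V, (i.1.1 : Set T)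
  let G : Set (Y × (T → Bool)) := {a | ∃ V ∈ TopologicalSpace.countableBasis Y, a.1 ∈ V ∧
    ∃ i ∈ C V, EqOn a.2 i.1.2.2 i.1.1}
  refine ⟨S, ?_, G, ?_, ?_, ?_⟩
  · exact (TopologicalSpace.countable_countableBasis Y).biUnion fun V _ =>
      (hC V).biUnion fun i _ => i.1.1.countable_toSet
  · rintro a ⟨V, hV, haV, i, hi, hai⟩ w hw
    have hiS : (i.1.1 : Set T) ⊆ S := fun t ht => mem_iUnion₂.2 ⟨V, hV, mem_iUnion₂.2 ⟨i, hi, ht⟩⟩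
    exact ⟨V, hV, haV, i, hi, (hw.mono hiS).trans hai⟩
  · rintro a ⟨⟨V, -, haV, i, -, hai⟩, haE⟩
    exact i.2.2 a haE haV hai
  · rintro a ⟨haO, haE⟩
    refine mem_closure_iff.2 fun N hN haN => ?_
    obtain ⟨V, hV, haV, K, hKN⟩ := exists_prod_setOf_eqOn_subset hB (hN.inter hO) ⟨haN, haO⟩
    let j : I V := ⟨(K, a), haE, fun c _ hcV hc => (hKN ⟨hcV, hc⟩).2⟩
    obtain ⟨u, huK, hu⟩ := mem_closure_iff.1
      (hdense V (mem_iUnion.2 ⟨j, fun t _ => rfl⟩)) _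
      (isOpen_setOf_eqOn K.finite_toSet a.2) fun t _ => rfl
    obtain ⟨i, hi, hui⟩ := mem_iUnion₂.1 hu
    obtain ⟨v, hvE, hvK, hvi⟩ := hE a haE i.1.2 i.2.1 K K.countable_toSet i.1.1
    have hvN : (a.1, v) ∈ N ∩ O := hKN ⟨haV, hvK⟩
    refine ⟨(a.1, v), hvN.1, ⟨V, hV, haV, i, hi, fun t ht => ?_⟩, hvE⟩
    by_cases htK : t ∈ (K : Set T)
    · exact (hvK htK).trans ((huK htK).symm.trans (hui ht))
    · exact hvi ⟨ht, htK⟩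

lemma CountablyMixing.mem_closure_of_map_mem_closure (hE : CountablyMixing E) {S : Set T}
    (hS : S.Countable) {G : Set (Y × (T → Bool))}
    (hG : ∀ a ∈ G, ∀ w, EqOn w a.2 S → (a.1, w) ∈ G) {a : Y × (T → Bool)} (ha : a ∈ E)
    (hmap : Prod.map id S.domRestrict a ∈ closure (Prod.map id S.domRestrict '' (G ∩ E))) :
    a ∈ closure (G ∩ E) := by
  refine mem_closure_iff.2 fun N hN haN => ?_
  obtain ⟨V, hV, haV, K, hKN⟩ :=
    exists_prod_setOf_eqOn_subset TopologicalSpace.isTopologicalBasis_opens hN haN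
  have hKS : (Subtype.val ⁻¹' (K : Set T) : Set S).Finite :=
    K.finite_toSet.preimage Subtype.val_injective.injOn
  obtain ⟨_, ⟨hgV, hgK⟩, g, ⟨hgG, hgE⟩, rfl⟩ := mem_closure_iff.1 hmap _
    (IsOpen.prod hV (isOpen_setOf_eqOn hKS (S.domRestrict a.2))) ⟨haV, fun t _ => rfl⟩
  obtain ⟨v, hvE, hvS, hvK⟩ := hE g hgE a ha S hS K
  refine ⟨(g.1, v), hKN ⟨hgV, fun t ht => ?_⟩, hG g hgG v hvS, hvE⟩
  by_cases htS : t ∈ S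
  · exact (hvS htS).trans (hgK (x := ⟨t, htS⟩) ht)
  · exact hvK ⟨ht, htS⟩

variable [SecondCountableTopology Y] [TopologicalSpace.PseudoMetrizableSpace Y]

lemma CountablyMixing.exists_functionallyClosed_inter_eq (hE : CountablyMixing E)
    {O : Set (Y × (T → Bool))} (hO : IsOpen O) :
    ∃ F : Set (Y × (T → Bool)), FunctionallyClosed F ∧ F ∩ E = closure (O ∩ E) ∩ E := by
  obtain ⟨S, hS, G, hG, hGO, hOG⟩ := hE.exists_countable_support hO
  have : Countable S := hS.to_subtype
  have hπ : Continuous (Prod.map id S.domRestrict : Y × (T → Bool) → Y × (S → Bool)) :=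
    continuous_id.prodMap (Pi.continuous_domRestrict S)
  refine ⟨_, (functionallyClosed_of_isClosed
    (isClosed_closure (s := Prod.map id S.domRestrict '' (G ∩ E)))).preimage hπ, ?_⟩
  ext a
  refine and_congr_left fun haE => ⟨fun ha => ?_, fun ha => ?_⟩
  · exact closure_mono (subset_inter hGO inter_subset_right)
      (hE.mem_closure_of_map_mem_closure hS hG haE ha)
  · exact image_closure_subset_closure_image hπ
      (mem_image_of_mem _ (closure_minimal hOG isClosed_closure ha))

theorem CountablyMixing.isAlphaEmbedded_zero (hE : CountablyMixing E) : IsAlphaEmbedded 0 E :=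
  isAlphaEmbedded_zero_of_forall_isOpen fun _ => hE.exists_functionallyClosed_inter_eq

end CountablyMixing

section Pieces

variable {Y R : Type*} {P : Set Y}

/-- The piece over `P ⊆ Y`, in the product of `Y` and a Cantor cube with the coordinates `(y, r)`
for `r : R` attached to each point `y`: the pairs `(y, x)` with `y ∈ P` such that `x` is supported
by the coordinates over `P` and does not vanish on the coordinates over `y`. -/
def pieceOver (R : Type*) {Y : Type*} (P : Set Y) : Set (Y × (Y × R → Bool)) :=
  {a | a.1 ∈ P ∧ (∃ r, a.2 (a.1, r) = true) ∧ ∀ t, a.2 t = true → t.1 ∈ P}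

lemma exists_mem_pieceOver [Uncountable R] {y : Y} (hy : y ∈ P) {K : Set (Y × R)}
    (hK : K.Countable) {x : Y × R → Bool} (hx : ∀ t ∈ K, x t = true → t.1 ∈ P) :
    ∃ v, (y, v) ∈ pieceOver R P ∧ EqOn v x K := by
  classical
  have hcount : (Prod.mk y ⁻¹' K).Countable := hK.preimage (Prod.mk_right_injective y)
  obtain ⟨r, hr⟩ : ∃ r, r ∉ Prod.mk y ⁻¹' K :=
    (ne_univ_iff_exists_notMem _).1 fun h => not_countable_univ (h ▸ hcount)
  let v : Y × R → Bool := K.piecewise x fun t => decide (t = (y, r))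
  have hvK : EqOn v x K := K.piecewise_eqOn x _
  have hvKc : EqOn v (fun t => decide (t = (y, r))) Kᶜ := K.piecewise_eqOn_compl x _
  refine ⟨v, ⟨hy, ⟨r, (hvKc hr).trans (decide_eq_true rfl)⟩, fun t ht => ?_⟩, hvK⟩
  by_cases htK : t ∈ K
  · exact hx t htK ((hvK htK).symm.trans ht)
  · have htr : t = (y, r) := of_decide_eq_true ((hvKc htK).symm.trans ht)
    exact htr ▸ hy

lemma countablyMixing_pieceOver [Uncountable R] (P : Set Y) :
    CountablyMixing (pieceOver R P) := by
  classical
  rintro a ⟨haP, -, ha⟩ b ⟨-, -, hb⟩ S hS K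
  have hsupp (t : Y × R) (ht : S.piecewise a.2 b.2 t = true) : t.1 ∈ P := by
    by_cases htS : t ∈ S
    · exact ha t (by rwa [piecewise_eq_of_mem _ _ _ htS] at ht)
    · exact hb t (by rwa [piecewise_eq_of_notMem _ _ _ htS] at ht)
  obtain ⟨v, hv, hvSK⟩ := exists_mem_pieceOver haP (hS.union K.countable_toSet) fun t _ => hsupp t
  exact ⟨v, hv, (hvSK.mono subset_union_left).trans (S.piecewise_eqOn _ _),
    (hvSK.mono (sdiff_subset.trans subset_union_right)).trans
      ((S.piecewise_eqOn_compl _ _).mono fun _ ht => ht.2)⟩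

variable [TopologicalSpace Y]

/-- A coordinate over `y ∈ P` at which a point over `y` does not vanish separates that point from
the piece over the complement of `P`. -/
lemma isOpen_preimage_val_pieceOver (R : Type*) (P : Set Y) :
    IsOpen (Subtype.val ⁻¹' pieceOver R P : Set ↥(pieceOver R P ∪ pieceOver R Pᶜ)) := by
  refine isOpen_iff_forall_mem_open.2 ?_
  rintro a ⟨haP, ⟨r, hr⟩, -⟩
  refine ⟨{c | c.1.2 (a.1.1, r) = true}, fun c hc => ?_, ?_, hr⟩
  · exact c.2.resolve_right fun h => h.2.2 _ hc haP
  · exact (isOpen_discrete {true}).preimage (by fun_prop)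

lemma isClopen_preimage_val_pieceOver (R : Type*) (P : Set Y) :
    IsClopen (Subtype.val ⁻¹' pieceOver R P : Set ↥(pieceOver R P ∪ pieceOver R Pᶜ)) := by
  refine ⟨⟨?_⟩, isOpen_preimage_val_pieceOver R P⟩
  have hcompl : (Subtype.val ⁻¹' pieceOver R P : Set ↥(pieceOver R P ∪ pieceOver R Pᶜ))ᶜ =
      Subtype.val ⁻¹' pieceOver R Pᶜ :=
    ext fun a => ⟨a.2.resolve_left, fun h h' => h.1 h'.1⟩
  have hopen := isOpen_preimage_val_pieceOver R Pᶜ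
  rw [compl_compl] at hopen
  rw [hcompl]
  exact hopen.preimage (continuous_inclusion (union_comm _ _).subset)

variable [Uncountable R] {α : Ordinal.{0}} {D : Set Y}

theorem isAlphaEmbedded_pieceOver_union_compl [SecondCountableTopology Y]
    [TopologicalSpace.PseudoMetrizableSpace Y] {b : Bool} {β : Ordinal.{0}}
    (hD : FunClass Y b β D) (hβα : β < α) :
    IsAlphaEmbedded α (pieceOver R D ∪ pieceOver R Dᶜ) :=
  ((countablyMixing_pieceOver D).isAlphaEmbedded_zero.of_zero α).union
    ((countablyMixing_pieceOver Dᶜ).isAlphaEmbedded_zero.of_zero α)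
    (fun c => (hD.of_lt hβα c).preimage continuous_fst) (fun _ ha => ha.1) fun _ ha => ha.1

theorem funClass_of_isAlphaEmbedded_pieceOver_union_compl [LindelofSpace Y]
    (h : IsAlphaEmbedded α (pieceOver R D ∪ pieceOver R Dᶜ)) : FunClass Y false α D := by
  have hclopen := functionallyClosed_of_isClopen (isClopen_preimage_val_pieceOver R D)
  obtain ⟨C, hC, hCD⟩ := h (pieceOver R D) subset_union_left
    ((FunClass.closed_ _ hclopen).mono zero_le)
  obtain ⟨K, hK, hCK⟩ := hC.exists_countable_forall_eqOn_mem_iff fun _ => false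
  have hsection : D = (fun y => (y, fun _ => false)) ⁻¹' C := by
    ext y
    by_cases hy : y ∈ D
    · obtain ⟨v, hv, hvK⟩ := exists_mem_pieceOver hy hK (x := fun _ => false) (by simp)
      exact iff_of_true hy ((hCK y v hvK).1 (hCD.symm.subset hv).1)
    · obtain ⟨v, hv, hvK⟩ := exists_mem_pieceOver (P := Dᶜ) hy hK (x := fun _ => false) (by simp)
      exact iff_of_false hy fun hyC => hv.1 (hCD.subset ⟨(hCK y v hvK).2 hyC, .inr hv⟩).1
  rw [hsection]
  exact hC.preimage (by fun_prop)

end Pieces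

/-- for every α < ω₁ there exist a completely regular space `X` and a
subset `E ⊆ X` which is (α+1)-embedded but not α-embedded in `X`. -/
theorem statement12 (α : Ordinal.{0}) (hα : α < (Cardinal.aleph 1).ord) :
    ∃ (X : Type) (τ : TopologicalSpace X), @CompletelyRegularSpace X τ ∧
      ∃ E : Set X, @IsAlphaEmbedded X τ (α + 1) E ∧ ¬ @IsAlphaEmbedded X τ α E := by
  obtain ⟨D, hD, hD'⟩ := exists_funClass_true_not_funClass_false hα
  refine ⟨Cantor × (Cantor × ℝ → Bool), inferInstance, inferInstance,
    pieceOver ℝ D ∪ pieceOver ℝ Dᶜ, ?_, ?_⟩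
  · exact isAlphaEmbedded_pieceOver_union_compl hD (lt_add_one α)
  · exact fun h => hD' (funClass_of_isAlphaEmbedded_pieceOver_union_compl h)
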